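/- Let u be an information structure on K × (C×C₁) × (D×D₁) and v = marg_{K×C×D}u. Suppose that under u the signal d₁ is ε-conditionally independent from (k, c) given d, and the signal c₁ is ε-conditionally independent from (k, d) given c. Then d(u,v) ≤ ε. -/

import Mathlib

open scoped BigOperators ENNReal

namespace ValueDistance

/-- An information structure: a probability distribution on `K × ℕ × ℕ`
(state, signal of player 1, signal of player 2). -/
abbrev InfoStruct (K : Type) := PMF (K × ℕ × ℕ)

/-- A behavior strategy / garbling : a map `ℕ → Δ(ℕ)`. -/
abbrev Garbling : Type := ℕ → PMF ℕ

variable {K : Type}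

/-- `g` is a payoff function with action bound `L` : values in `[-1,1]`,
`g k i j = -1` when `i ≥ L`, and `g k i j = 1` when `i < L` and `j ≥ L`. -/
def IsPayoffL (L : ℕ) (g : K → ℕ → ℕ → ℝ) : Prop :=
  (∀ k i j, g k i j ∈ Set.Icc (-1 : ℝ) 1) ∧
  (∀ k i j, L ≤ i → g k i j = -1) ∧
  (∀ k i j, i < L → L ≤ j → g k i j = 1)

/-- `g` belongs to the set `𝒢` of payoff functions. -/
def IsPayoff (g : K → ℕ → ℕ → ℝ) : Prop := ∃ L, IsPayoffL L g

/-- `g` belongs to the set `𝒢₁` of single-agent (player 1) problems. -/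
def IsPayoff1 (g : K → ℕ → ℕ → ℝ) : Prop :=
  IsPayoff g ∧ ∀ k i j j', g k i j = g k i j'

/-- Expected payoff in the Bayesian game `Γ(u,g)` when player 1 uses the behavior
strategy `σ` and player 2 uses `τ`. -/
noncomputable def payoff (u : InfoStruct K) (g : K → ℕ → ℕ → ℝ)
    (σ τ : Garbling) : ℝ :=
  ∑' (x : K × ℕ × ℕ) (i : ℕ) (j : ℕ),
    (u x).toReal * (σ x.2.1 i).toReal * (τ x.2.2 j).toReal * g x.1 i j

/-- The value `val(u,g)` of the zero-sum Bayesian game `Γ(u,g)`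
(the common value of `sup inf` and `inf sup` of the expected payoff;
we take `sup inf` as the definition). -/
noncomputable def val (u : InfoStruct K) (g : K → ℕ → ℕ → ℝ) : ℝ :=
  ⨆ σ : Garbling, ⨅ τ : Garbling, payoff u g σ τ

/-- Total variation distance `‖u − v‖`. -/
noncomputable def tv {α : Type} (u v : PMF α) : ℝ :=
  ∑' x : α, |(u x).toReal - (v x).toReal|

/-- `q.u` : player 1's signal garbled through `q`. -/
noncomputable def garbleLeft (q : Garbling) (u : InfoStruct K) : InfoStruct K :=
  u.bind (fun x => (q x.2.1).map (fun c => (x.1, c, x.2.2)))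

/-- `u.q` : player 2's signal garbled through `q`. -/
noncomputable def garbleRight (u : InfoStruct K) (q : Garbling) : InfoStruct K :=
  u.bind (fun x => (q x.2.2).map (fun d => (x.1, x.2.1, d)))

/-- The value-based distance `d(u,v) = sup_{g ∈ 𝒢} |val(u,g) − val(v,g)|`. -/
noncomputable def dVal (u v : InfoStruct K) : ℝ :=
  ⨆ g : {g : K → ℕ → ℕ → ℝ // IsPayoff g}, |val u g.1 - val v g.1|

/-- The single-agent distance `d₁(u,v) = sup_{g ∈ 𝒢₁} |val(u,g) − val(v,g)|`. -/
noncomputable def d1 (u v : InfoStruct K) : ℝ :=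
  ⨆ g : {g : K → ℕ → ℕ → ℝ // IsPayoff1 g}, |val u g.1 - val v g.1|

/-- Marginal of an information structure on `K × ℕ` (state, player 1's signal). -/
noncomputable def marg1 (u : InfoStruct K) : PMF (K × ℕ) :=
  u.map (fun x => (x.1, x.2.1))

/-- Garbling of a single-agent information structure:
`(q.w)(k,c) = Σ_s w(k,s)·q(s)({c})`. -/
noncomputable def garble1 (q : Garbling) (w : PMF (K × ℕ)) : PMF (K × ℕ) :=
  w.bind (fun x => (q x.2).map (fun c => (x.1, c)))

/-- Marginal of an information structure on the states. -/
noncomputable def margK (u : InfoStruct K) : PMF K := u.map Prod.fst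

/-- Marginal of an information structure on `K × ℕ` (state, player 2's signal). -/
noncomputable def margKD (u : InfoStruct K) : PMF (K × ℕ) :=
  u.map (fun x => (x.1, x.2.2))

/-- `σ.q` : on signal `c`, draw `c'` according to `q(c)` and play `σ(c')`. -/
noncomputable def compGarble (σ q : Garbling) : Garbling :=
  fun c => (q c).bind σ

/-- `u ∈ 𝒰(L)` : both players' signals are `< L` with probability 1. -/
def InU (L : ℕ) (u : InfoStruct K) : Prop :=
  ∀ x : K × ℕ × ℕ, u x ≠ 0 → x.2.1 < L ∧ x.2.2 < L

/-- `q ∈ 𝒬(L)` : garbling with values supported on `{0,…,L−1}`. -/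
def GarblingIn (L : ℕ) (q : Garbling) : Prop :=
  ∀ n m, q n m ≠ 0 → m < L

/-- The two players' signals are conditionally independent given the state:
`u(k)·u(k,c,d) = u(k,c)·u(k,d)` for all `k, c, d`
(equivalently `u(c,d|k) = u(c|k)·u(d|k)` whenever `u(k) > 0`). -/
def CondIndep (u : InfoStruct K) : Prop :=
  ∀ (k : K) (c d : ℕ),
    (∑' y : ℕ × ℕ, u (k, y)) * u (k, c, d)
      = (∑' d' : ℕ, u (k, c, d')) * (∑' c' : ℕ, u (k, c', d))

end ValueDistance

namespace ValueDistance

noncomputable def Ex {α : Type} (p : PMF α) (f : α → ℝ) : ℝ := ∑' a, (p a).toReal * f a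

lemma summ_pmf {α : Type} (p : PMF α) : Summable (fun a => (p a).toReal) :=
  ENNReal.summable_toReal p.tsum_coe_ne_top

lemma tsum_pmf {α : Type} (p : PMF α) : ∑' a, (p a).toReal = 1 := by
  rw [← ENNReal.tsum_toReal_eq (fun a => p.apply_ne_top a), p.tsum_coe]; simp

lemma summ_mul {α : Type} {h : α → ℝ} (h0 : ∀ a, 0 ≤ h a) (hs : Summable h) {f : α → ℝ}
    (hf : ∀ a, |f a| ≤ 1) : Summable (fun a => h a * f a) := by
  refine Summable.of_norm_bounded hs (fun a => ?_)
  rw [Real.norm_eq_abs, abs_mul, abs_of_nonneg (h0 a)]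
  exact mul_le_of_le_one_right (h0 a) (hf a)

lemma Ex_summ {α : Type} (p : PMF α) {f : α → ℝ} (hf : ∀ a, |f a| ≤ 1) :
    Summable (fun a => (p a).toReal * f a) :=
  summ_mul (fun _ => ENNReal.toReal_nonneg) (summ_pmf p) hf

lemma Ex_abs {α : Type} (p : PMF α) {f : α → ℝ} (hf : ∀ a, |f a| ≤ 1) : |Ex p f| ≤ 1 := by
  rw [← tsum_pmf p, ← Real.norm_eq_abs]
  refine tsum_of_norm_bounded (summ_pmf p).hasSum (fun a => ?_)
  rw [Real.norm_eq_abs, abs_mul, abs_of_nonneg ENNReal.toReal_nonneg]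
  exact mul_le_of_le_one_right ENNReal.toReal_nonneg (hf a)

lemma summ2 {α β : Type} (p : PMF α) (q : α → PMF β) :
    Summable (fun x : α × β => (p x.1).toReal * (q x.1 x.2).toReal) := by
  have : (fun x : α × β => (p x.1).toReal * (q x.1 x.2).toReal)
      = fun x : α × β => (p x.1 * q x.1 x.2).toReal := by
    ext x; rw [ENNReal.toReal_mul]
  rw [this]
  apply ENNReal.summable_toReal
  rw [ENNReal.tsum_prod']
  simp only [ENNReal.tsum_mul_left, PMF.tsum_coe, mul_one]
  simp

lemma summ2f {α β : Type} (p : PMF α) (q : α → PMF β) {f : α → β → ℝ}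
    (hf : ∀ a b, |f a b| ≤ 1) :
    Summable (fun x : α × β => (p x.1).toReal * (q x.1 x.2).toReal * f x.1 x.2) :=
  summ_mul (fun _ => by positivity) (summ2 p q) (fun x => hf x.1 x.2)

lemma Ex_comm {α β : Type} (p : PMF α) (q : PMF β) {f : α → β → ℝ}
    (hf : ∀ a b, |f a b| ≤ 1) :
    Ex p (fun a => Ex q (fun b => f a b)) = Ex q (fun b => Ex p (fun a => f a b)) := by
  have h := (summ2f p (fun _ => q) hf).tsum_comm (f := fun a b => (p a).toReal * (q b).toReal * f a b)
  simp only [Ex, ← tsum_mul_left]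
  rw [show (∑' a, ∑' b, (p a).toReal * ((q b).toReal * f a b)) =
    ∑' a, ∑' b, (p a).toReal * (q b).toReal * f a b by simp only [mul_assoc], ← h]
  congr 1; ext b; congr 1; ext a; ring

lemma Ex_bind {α β : Type} (p : PMF α) (q : α → PMF β) {f : β → ℝ}
    (hf : ∀ b, |f b| ≤ 1) :
    Ex (p.bind q) f = Ex p (fun a => Ex (q a) f) := by
  have h := (summ2f p q (f := fun _ b => f b) (fun _ => hf)).tsum_comm
    (f := fun a b => (p a).toReal * (q a b).toReal * f b)
  simp only [Ex, ← tsum_mul_left]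
  rw [show (∑' a, ∑' b, (p a).toReal * ((q a b).toReal * f b)) =
    ∑' a, ∑' b, (p a).toReal * (q a b).toReal * f b by simp only [mul_assoc], ← h]
  congr 1; ext b
  rw [tsum_mul_right, PMF.bind_apply, ENNReal.tsum_toReal_eq]
  · simp only [ENNReal.toReal_mul]
  · exact fun a => ENNReal.mul_ne_top (p.apply_ne_top a) ((q a).apply_ne_top b)

lemma Ex_pure {α : Type} (a : α) (f : α → ℝ) : Ex (PMF.pure a) f = f a := by
  classical
  rw [Ex, tsum_eq_single a]
  · simp
  · intro b hb; simp [hb]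

lemma Ex_map {α β : Type} (p : PMF α) (t : α → β) {f : β → ℝ}
    (hf : ∀ b, |f b| ≤ 1) : Ex (p.map t) f = Ex p (fun a => f (t a)) := by
  rw [PMF.map, Ex_bind _ _ hf]; simp [Ex_pure]

lemma Ex_diff {α : Type} (p q : PMF α) {f : α → ℝ} (hf : ∀ a, |f a| ≤ 1) :
    |Ex p f - Ex q f| ≤ ∑' a, |(p a).toReal - (q a).toReal| := by
  rw [Ex, Ex, ← (Ex_summ p hf).tsum_sub (Ex_summ q hf), ← Real.norm_eq_abs]
  refine tsum_of_norm_bounded ((summ_pmf p).sub (summ_pmf q)).abs.hasSum (fun a => ?_)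
  rw [Real.norm_eq_abs, ← sub_mul, abs_mul]
  exact mul_le_of_le_one_right (abs_nonneg _) (hf a)

lemma exists_q {X : Type} (m : PMF (X × ℕ × ℕ)) : ∃ q : ℕ → PMF ℕ, ∀ x z y,
    (∑' y', m (x,z,y')).toReal * (q z y).toReal = (∑' y', m (x,z,y')).toReal *
      (∑' x', m (x',z,y)).toReal / (∑' x', ∑' y', m (x',z,y')).toReal := by
  have hz : ∀ z, ∃ q : PMF ℕ, ∀ x y,
    (∑' y', m (x,z,y')).toReal * (q y).toReal = (∑' y', m (x,z,y')).toReal *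
      (∑' x', m (x',z,y)).toReal / (∑' x', ∑' y', m (x',z,y')).toReal := by
    intro z
    by_cases h0 : (∑' x', ∑' y', m (x',z,y')) = 0
    · refine ⟨PMF.pure 0, fun x y => ?_⟩
      rw [ENNReal.tsum_eq_zero] at h0
      simp [h0 x]
    · have htop : (∑' x', ∑' y', m (x',z,y')) ≠ ⊤ := by
        have hle : (∑' x', ∑' y', m (x',z,y')) ≤ ∑' a, m a := by
          rw [← ENNReal.tsum_prod (f := fun x' y' => m (x',z,y'))]
          refine ENNReal.tsum_comp_le_tsum_of_injective (f := fun p : X × ℕ => (p.1, z, p.2)) ?_ m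
          rintro ⟨a, b⟩ ⟨c, d⟩ h
          simp at h; simp [h]
        rw [m.tsum_coe] at hle
        exact ne_top_of_le_ne_top ENNReal.one_ne_top hle
      have hc : (∑' y, ∑' x', m (x',z,y)) = ∑' x', ∑' y', m (x',z,y') := ENNReal.tsum_comm
      refine ⟨PMF.normalize (fun y => ∑' x', m (x',z,y)) (by rwa [hc]) (by rwa [hc]), fun x y => ?_⟩
      rw [PMF.normalize_apply, hc, ENNReal.toReal_mul, ENNReal.toReal_inv]
      ring
  choose q hq using hz
  exact ⟨q, fun x z y => hq z x y⟩

lemma map2_apply {X : Type} (m : PMF (X × ℕ × ℕ)) (x : X) (z : ℕ) :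
    (m.map (fun a => (a.1, a.2.1))) (x, z) = ∑' y, m (x, z, y) := by
  classical
  rw [PMF.map_apply, ENNReal.tsum_prod', tsum_eq_single x]
  · rw [ENNReal.tsum_prod', tsum_eq_single z]
    · simp
    · intro b hb; simp [hb.symm]
  · intro b hb; simp [hb.symm]

lemma prod_apply' {X : Type} (n : PMF (X × ℕ)) (q : ℕ → PMF ℕ) (x : X) (z y : ℕ) :
    (n.bind (fun a => (q a.2).map (fun b => (a.1, a.2, b)))) (x, z, y) = n (x,z) * q z y := by
  classical
  rw [PMF.bind_apply, tsum_eq_single (x, z)]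
  · rw [PMF.map_apply, tsum_eq_single y]
    · simp
    · intro b hb; simp [hb.symm]
  · rintro ⟨a, b⟩ hb
    rw [PMF.map_apply, ENNReal.tsum_eq_zero.2]
    · simp
    · intro c
      rw [if_neg]
      intro h
      simp only [Prod.mk.injEq] at h
      exact hb (by simp [h])

lemma key {X : Type} (m : PMF (X × ℕ × ℕ)) : ∃ q : ℕ → PMF ℕ,
    Summable (fun a : X × ℕ × ℕ => |(m a).toReal - (∑' y', m (a.1,a.2.1,y')).toReal *
      (∑' x', m (x',a.2.1,a.2.2)).toReal / (∑' x', ∑' y', m (x',a.2.1,y')).toReal|) ∧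
    ∀ F : X → ℕ → ℕ → ℝ, (∀ x z y, |F x z y| ≤ 1) →
    |Ex m (fun a => F a.1 a.2.1 a.2.2) - Ex m (fun a => Ex (q a.2.1) (F a.1 a.2.1))| ≤
     ∑' a : X × ℕ × ℕ, |(m a).toReal - (∑' y', m (a.1,a.2.1,y')).toReal *
      (∑' x', m (x',a.2.1,a.2.2)).toReal / (∑' x', ∑' y', m (x',a.2.1,y')).toReal| := by
  obtain ⟨q, hq⟩ := exists_q m
  set m' : PMF (X × ℕ × ℕ) := ((m.map (fun a => (a.1, a.2.1))).bind
    (fun a => (q a.2).map (fun b => (a.1, a.2, b)))) with hm'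
  have e : ∀ a : X × ℕ × ℕ, (∑' y', m (a.1,a.2.1,y')).toReal *
      (∑' x', m (x',a.2.1,a.2.2)).toReal / (∑' x', ∑' y', m (x',a.2.1,y')).toReal
      = (m' a).toReal := by
    rintro ⟨x, z, y⟩
    rw [hm', prod_apply', map2_apply, ENNReal.toReal_mul, ← hq]
  simp only [e]
  refine ⟨q, ((summ_pmf m).sub (summ_pmf m')).abs, fun F hF => ?_⟩
  have := Ex_diff m m' (f := fun a => F a.1 a.2.1 a.2.2) (fun a => hF _ _ _)
  convert this using 3
  rw [hm', Ex_bind _ _ (fun a => hF _ _ _), Ex_map]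
  · congr 1; ext a
    rw [Ex_map _ _ (fun a => hF _ _ _)]
  · intro b; exact Ex_abs _ (fun a => hF _ _ _)

/-- nested form of the sum -/
lemma nest {K : Type} (S : (K × ℕ) × ℕ × ℕ → ℝ) (hS : Summable S) :
    ∑' a, S a = ∑' (z : ℕ) (k : K) (c : ℕ) (y : ℕ), S ((k, c), z, y) := by
  let e : ℕ × K × ℕ × ℕ ≃ (K × ℕ) × ℕ × ℕ :=
    ⟨fun a => ((a.2.1, a.2.2.1), a.1, a.2.2.2), fun b => (b.2.1, b.1.1, b.1.2, b.2.2),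
      fun _ => rfl, fun _ => rfl⟩
  have h1 : Summable (fun a => S (e a)) := (e.summable_iff).2 hS
  rw [← e.tsum_eq S, h1.tsum_prod]
  congr 1; ext z
  have h2 := h1.prod_factor z
  rw [h2.tsum_prod]
  congr 1; ext k
  have h3 := h2.prod_factor k
  rw [h3.tsum_prod]
  rfl

lemma key1 {K : Type} (m : PMF ((K × ℕ) × ℕ × ℕ)) : ∃ q : ℕ → PMF ℕ,
    ∀ F : K × ℕ → ℕ → ℕ → ℝ, (∀ x z y, |F x z y| ≤ 1) →
    |Ex m (fun a => F a.1 a.2.1 a.2.2) - Ex m (fun a => Ex (q a.2.1) (F a.1 a.2.1))| ≤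
     ∑' (z : ℕ) (k : K) (c : ℕ) (y : ℕ), |(m ((k,c),z,y)).toReal -
      (∑' y', m ((k,c),z,y')).toReal *
      (∑' (k' : K) (c' : ℕ), m ((k',c'),z,y)).toReal /
      (∑' (k' : K) (c' : ℕ) (y' : ℕ), m ((k',c'),z,y')).toReal| := by
  obtain ⟨q, hs, h⟩ := key m
  refine ⟨q, fun F hF => (h F hF).trans_eq ?_⟩
  rw [nest _ hs]
  simp only [ENNReal.tsum_prod']

lemma mapD {K : Type} (w : PMF (K × (ℕ × ℕ) × (ℕ × ℕ))) (k : K) (c d d₁ : ℕ) :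
    (w.map (fun x => ((x.1, x.2.1.1), x.2.2.1, x.2.2.2))) ((k, c), d, d₁)
      = ∑' c₁ : ℕ, w (k, (c, c₁), (d, d₁)) := by
  classical
  rw [PMF.map_apply, ENNReal.tsum_prod', tsum_eq_single k, ENNReal.tsum_prod', ENNReal.tsum_prod',
    tsum_eq_single c]
  · congr 1; ext c₁
    rw [tsum_eq_single (d, d₁)]
    · simp
    · rintro ⟨a, b⟩ hb
      rw [if_neg]; rintro h; simp only [Prod.mk.injEq] at h; exact hb (by simp [h])
  · intro b hb; simp [hb.symm]
  · intro b hb; simp [hb.symm]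

lemma mapC {K : Type} (w : PMF (K × (ℕ × ℕ) × (ℕ × ℕ))) (k : K) (c c₁ d : ℕ) :
    (w.map (fun x => ((x.1, x.2.2.1), x.2.1.1, x.2.1.2))) ((k, d), c, c₁)
      = ∑' d₁ : ℕ, w (k, (c, c₁), (d, d₁)) := by
  classical
  rw [PMF.map_apply, ENNReal.tsum_prod', tsum_eq_single k, ENNReal.tsum_prod',
    tsum_eq_single (c, c₁), ENNReal.tsum_prod', tsum_eq_single d]
  · simp
  · intro b hb; simp [hb.symm]
  · rintro ⟨a, b⟩ hb
    rw [ENNReal.tsum_eq_zero.2]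
    intro x
    rw [if_neg]; rintro h; simp only [Prod.mk.injEq] at h; exact hb (by simp [h])
  · intro b hb; simp [hb.symm]

lemma payoff_eq {K : Type} (u : InfoStruct K) (g : K → ℕ → ℕ → ℝ) (σ τ : Garbling) :
    payoff u g σ τ = Ex u (fun x => Ex (σ x.2.1) (fun i => Ex (τ x.2.2) (fun j => g x.1 i j))) := by
  simp only [payoff, Ex, ← tsum_mul_left, mul_assoc]

lemma payoff_abs {K : Type} (u : InfoStruct K) {g : K → ℕ → ℕ → ℝ} (hg : ∀ k i j, |g k i j| ≤ 1)
    (σ τ : Garbling) : |payoff u g σ τ| ≤ 1 := by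
  rw [payoff_eq]
  exact Ex_abs _ fun _ => Ex_abs _ fun _ => Ex_abs _ fun _ => hg _ _ _

lemma val_le {K : Type} (u v : InfoStruct K) {g : K → ℕ → ℕ → ℝ} (hg : ∀ k i j, |g k i j| ≤ 1)
    (ε : ℝ) (h : ∀ σ, ∃ σ', ∀ τ, ∃ τ', payoff u g σ τ' ≤ payoff v g σ' τ + ε) :
    val u g ≤ val v g + ε := by
  haveI : Nonempty Garbling := ⟨fun _ => PMF.pure 0⟩
  have hb : ∀ (u : InfoStruct K) σ, BddBelow (Set.range fun τ => payoff u g σ τ) := by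
    intro u σ
    refine ⟨-1, ?_⟩
    rintro _ ⟨τ, rfl⟩
    exact (abs_le.1 (payoff_abs u hg σ τ)).1
  have hB : BddAbove (Set.range fun σ => ⨅ τ : Garbling, payoff v g σ τ) := by
    refine ⟨1, ?_⟩
    rintro _ ⟨σ, rfl⟩
    exact (ciInf_le (hb v σ) (fun _ => PMF.pure 0)).trans (abs_le.1 (payoff_abs v hg σ _)).2
  refine ciSup_le fun σ => ?_
  obtain ⟨σ', h'⟩ := h σ
  have h1 : (⨅ τ : Garbling, payoff u g σ τ) - ε ≤ ⨅ τ : Garbling, payoff v g σ' τ := by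
    refine le_ciInf fun τ => ?_
    obtain ⟨τ', h''⟩ := h' τ
    have := ciInf_le (hb u σ) τ'
    linarith
  have h2 := le_ciSup hB σ'
  simp only [val] at h2 ⊢
  linarith

theorem joint_info_not_valuable (K : Type) [Fintype K]
    (hK : 2 ≤ Fintype.card K) (ε : ℝ) (w : PMF (K × (ℕ × ℕ) × (ℕ × ℕ)))
    (hd₁ : (∑' (d : ℕ) (k : K) (c : ℕ) (d₁ : ℕ),
        |(∑' c₁ : ℕ, w (k, (c, c₁), (d, d₁))).toReal
          - (∑' (c₁ : ℕ) (d₁' : ℕ), w (k, (c, c₁), (d, d₁'))).toReal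
            * (∑' (k' : K) (c' : ℕ) (c₁' : ℕ), w (k', (c', c₁'), (d, d₁))).toReal
            / (∑' (k' : K) (c' : ℕ) (c₁' : ℕ) (d₁' : ℕ),
                w (k', (c', c₁'), (d, d₁'))).toReal|) ≤ ε)
    (hc₁ : (∑' (c : ℕ) (k : K) (d : ℕ) (c₁ : ℕ),
        |(∑' d₁ : ℕ, w (k, (c, c₁), (d, d₁))).toReal
          - (∑' (c₁' : ℕ) (d₁' : ℕ), w (k, (c, c₁'), (d, d₁'))).toReal
            * (∑' (k' : K) (d' : ℕ) (d₁' : ℕ), w (k', (c, c₁), (d', d₁'))).toReal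
            / (∑' (k' : K) (c₁' : ℕ) (d' : ℕ) (d₁' : ℕ),
                w (k', (c, c₁'), (d', d₁'))).toReal|) ≤ ε) :
    dVal (w.map (fun x => (x.1, Nat.pair x.2.1.1 x.2.1.2, Nat.pair x.2.2.1 x.2.2.2)))
         (w.map (fun x => (x.1, x.2.1.1, x.2.2.1))) ≤ ε := by
  have hε : 0 ≤ ε := le_trans (tsum_nonneg fun d => tsum_nonneg fun k => tsum_nonneg fun c =>
    tsum_nonneg fun d₁ => abs_nonneg _) hd₁
  obtain ⟨q, hq⟩ := key1 (w.map (fun x => ((x.1, x.2.1.1), x.2.2.1, x.2.2.2)))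
  obtain ⟨r, hr⟩ := key1 (w.map (fun x => ((x.1, x.2.2.1), x.2.1.1, x.2.1.2)))
  simp only [mapD] at hq
  simp only [mapC] at hr
  have eD : ∀ (f : ℕ → ℕ → ENNReal), ∑' d₁, ∑' c₁, f c₁ d₁ = ∑' c₁, ∑' d₁, f c₁ d₁ :=
    fun f => ENNReal.tsum_comm
  have hq' : ∀ F : K × ℕ → ℕ → ℕ → ℝ, (∀ x z y, |F x z y| ≤ 1) →
      |Ex w (fun x => F (x.1, x.2.1.1) x.2.2.1 x.2.2.2)
        - Ex w (fun x => Ex (q x.2.2.1) (F (x.1, x.2.1.1) x.2.2.1))| ≤ ε := by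
    intro F hF
    have h := hq F hF
    rw [Ex_map _ _ (fun a => hF _ _ _), Ex_map _ _ (fun a => Ex_abs _ (fun b => hF _ _ _))] at h
    refine h.trans (le_trans (le_of_eq ?_) hd₁)
    congr 1; ext d; congr 1; ext k; congr 1; ext c; congr 1; ext d₁
    rw [eD (fun c₁ d₁ => w (k, (c, c₁), (d, d₁)))]
    congr 5; ext k'; congr 1; ext c'
    exact eD (fun c₁ d₁ => w (k', (c', c₁), (d, d₁)))
  have hr' : ∀ F : K × ℕ → ℕ → ℕ → ℝ, (∀ x z y, |F x z y| ≤ 1) →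
      |Ex w (fun x => F (x.1, x.2.2.1) x.2.1.1 x.2.1.2)
        - Ex w (fun x => Ex (r x.2.1.1) (F (x.1, x.2.2.1) x.2.1.1))| ≤ ε := by
    intro F hF
    have h := hr F hF
    rw [Ex_map _ _ (fun a => hF _ _ _), Ex_map _ _ (fun a => Ex_abs _ (fun b => hF _ _ _))] at h
    refine h.trans (le_trans (le_of_eq ?_) hc₁)
    congr 1; ext c; congr 1; ext k; congr 1; ext d; congr 1; ext c₁
    congr 5; ext k'
    exact eD (fun c₁ d => ∑' d₁, w (k', (c, c₁), (d, d₁)))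
  refine Real.iSup_le ?_ hε
  rintro ⟨g, L, hg, -, -⟩
  replace hg : ∀ k i j, |g k i j| ≤ 1 := fun k i j => abs_le.2 (hg k i j)
  have b2 : ∀ k i (t : PMF ℕ), |Ex t (fun j => g k i j)| ≤ 1 := fun k i t => Ex_abs _ (hg k i)
  have b3 : ∀ k (s t : PMF ℕ), |Ex s (fun i => Ex t (fun j => g k i j))| ≤ 1 :=
    fun k s t => Ex_abs _ fun i => b2 k i t
  simp only
  rw [abs_le]
  constructor
  · have := val_le (w.map (fun x => (x.1, x.2.1.1, x.2.2.1)))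
      (w.map (fun x => (x.1, Nat.pair x.2.1.1 x.2.1.2, Nat.pair x.2.2.1 x.2.2.2))) hg ε ?_
    · linarith
    intro σ
    refine ⟨fun n => σ n.unpair.1, fun τ =>
      ⟨fun d => (q d).bind (fun d₁ => τ (Nat.pair d d₁)), ?_⟩⟩
    rw [payoff_eq, payoff_eq, Ex_map _ _ (fun x => b3 _ _ _), Ex_map _ _ (fun x => b3 _ _ _)]
    have h := hq' (fun x d d₁ => Ex (σ x.2) (fun i => Ex (τ (Nat.pair d d₁)) (fun j => g x.1 i j)))
      (fun x z y => b3 _ _ _)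
    have e : ∀ x : K × (ℕ × ℕ) × (ℕ × ℕ), Ex (σ x.2.1.1) (fun i =>
        Ex ((q x.2.2.1).bind (fun d₁ => τ (Nat.pair x.2.2.1 d₁))) (fun j => g x.1 i j)) =
        Ex (q x.2.2.1) (fun d₁ => Ex (σ x.2.1.1) (fun i =>
          Ex (τ (Nat.pair x.2.2.1 d₁)) (fun j => g x.1 i j))) := by
      intro x
      rw [Ex_comm _ _ (fun a b => b2 _ _ _)]
      congr 1; ext i
      rw [Ex_bind _ _ (hg _ _)]
    simp only [Nat.unpair_pair, e]
    linarith [(abs_le.1 h).1]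
  · have := val_le (w.map (fun x => (x.1, Nat.pair x.2.1.1 x.2.1.2, Nat.pair x.2.2.1 x.2.2.2)))
      (w.map (fun x => (x.1, x.2.1.1, x.2.2.1))) hg ε ?_
    · linarith
    intro σ
    refine ⟨fun c => (r c).bind (fun c₁ => σ (Nat.pair c c₁)), fun τ =>
      ⟨fun n => τ n.unpair.1, ?_⟩⟩
    rw [payoff_eq, payoff_eq, Ex_map _ _ (fun x => b3 _ _ _), Ex_map _ _ (fun x => b3 _ _ _)]
    have h := hr' (fun x c c₁ => Ex (σ (Nat.pair c c₁)) (fun i => Ex (τ x.2) (fun j => g x.1 i j)))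
      (fun x z y => b3 _ _ _)
    have e : ∀ x : K × (ℕ × ℕ) × (ℕ × ℕ),
        Ex ((r x.2.1.1).bind (fun c₁ => σ (Nat.pair x.2.1.1 c₁))) (fun i =>
        Ex (τ x.2.2.1) (fun j => g x.1 i j)) =
        Ex (r x.2.1.1) (fun c₁ => Ex (σ (Nat.pair x.2.1.1 c₁)) (fun i =>
          Ex (τ x.2.2.1) (fun j => g x.1 i j))) := by
      intro x
      rw [Ex_bind _ _ (fun i => b2 _ _ _)]
    simp only [Nat.unpair_pair, e]
    linarith [(abs_le.1 h).2]

end ValueDistance
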